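/- Suppose M is a k-bounded m×n integer matrix, and let P = {v ∈ ℕ^n : M·v ≥ 0}, where M·v ≥ 0 means every entry of the integer vector M·v is nonnegative. If P contains a nonzero vector, then P contains a nonzero vector v that is (nk + n·log₂(n)/2)-bounded; that is, every entry of v is at most 2^{nk} · n^{n/2} (as real numbers). -/

import Mathlib

/-!
Over `ℚ`, the cone `C = {v : 0 ≤ v, 0 ≤ M v}` is cut out by the rows of `M` stacked on the identity
matrix. Take a nonzero `v ∈ C` with as many tight constraints as possible, and `j₀` with `v j₀ ≠ 0`.
A ratio test shows that a vector annihilated by all tight rows and by `e_{j₀}` is zero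
(`exists_extreme_ray`), so `e_{j₀}` can be completed by tight rows to an invertible integer matrix
`B` with `B v = v j₀ • e_{i₀}` (`exists_square_system`). Hence the column `i₀` of `adjugate B` is a
nonzero multiple of `v`; up to sign it is a nonzero integer vector of `C`. Its entries are
`n × n` determinants whose entries are bounded by `2 ^ k`, and Hadamard's inequality
(`abs_det_le_of_entries_le`) gives the bound.
-/

/-- Hadamard's inequality for a matrix with entries bounded by `c`. -/
lemma abs_det_le_of_entries_le (n : ℕ) (A : Matrix (Fin n) (Fin n) ℝ) (c : ℝ) (hc : 0 ≤ c)
    (hA : ∀ i j, |A i j| ≤ c) : |A.det| ≤ c ^ n * (n : ℝ) ^ ((n : ℝ) / 2) := by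
  have : Fact (Module.finrank ℝ (EuclideanSpace ℝ (Fin n)) = n) := ⟨by simp⟩
  let b := EuclideanSpace.basisFun (Fin n) ℝ
  let r : Fin n → EuclideanSpace ℝ (Fin n) := fun i => WithLp.toLp 2 (A i)
  have hdet : b.toBasis.det r = A.det := by
    rw [Module.Basis.det_apply, ← Matrix.det_transpose]
    congr 1
  have h := b.toBasis.orientation.abs_volumeForm_apply_le r
  rw [b.toBasis.orientation.volumeForm_robust b rfl, hdet] at h
  have hr : ∀ i, ‖r i‖ ≤ c * √n := by
    intro i
    rw [EuclideanSpace.norm_eq]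
    apply Real.sqrt_le_iff.2
    refine ⟨by positivity, ?_⟩
    calc ∑ j, ‖(r i) j‖ ^ 2 ≤ ∑ _j : Fin n, c ^ 2 := by
          apply Finset.sum_le_sum
          intro j _
          exact pow_le_pow_left₀ (norm_nonneg _) (hA i j) 2
      _ = (c * √n) ^ 2 := by
          rw [mul_pow, Real.sq_sqrt (Nat.cast_nonneg n)]
          simp [mul_comm]
  calc |A.det| ≤ ∏ i, ‖r i‖ := h
    _ ≤ ∏ _i : Fin n, (c * √n) := Finset.prod_le_prod (fun _ _ => norm_nonneg _) (fun i _ => hr i)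
    _ = c ^ n * (n : ℝ) ^ ((n : ℝ) / 2) := by
        rw [Finset.prod_const, Finset.card_univ, Fintype.card_fin, mul_pow]
        congr 1
        rw [Real.sqrt_eq_rpow, ← Real.rpow_natCast, ← Real.rpow_mul (Nat.cast_nonneg n)]
        congr 1
        ring

/-- If every unit vector is a row of `A`, so that `0 ≤ A v` implies `0 ≤ v`, then a nonzero solution
of `0 ≤ A v` with the most tight constraints is determined by them up to scaling. -/
lemma exists_extreme_ray {ι : Type*} [Fintype ι] {n : ℕ} (A : Matrix ι (Fin n) ℚ)
    (hpos : ∀ j, ∃ i, A i = Pi.single j 1)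
    (h : ∃ v : Fin n → ℚ, v ≠ 0 ∧ ∀ i, 0 ≤ A.mulVec v i) :
    ∃ v : Fin n → ℚ, ∃ j₀, 0 < v j₀ ∧ (∀ i, 0 ≤ A.mulVec v i) ∧
      ∀ w : Fin n → ℚ, (∀ i, A.mulVec v i = 0 → A.mulVec w i = 0) → w j₀ = 0 → w = 0 := by
  classical
  let T : (Fin n → ℚ) → Finset ι := fun v => {i | A.mulVec v i = 0}
  let p : ℕ → Prop := fun d => ∃ v : Fin n → ℚ, v ≠ 0 ∧ (∀ i, 0 ≤ A.mulVec v i) ∧ (T v).card = d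
  obtain ⟨v₀, hv₀, hv₀'⟩ := h
  have hb : ∀ d, p d → d ≤ Fintype.card ι := by
    rintro d ⟨v, -, -, rfl⟩
    exact Finset.card_le_univ _
  have hp : p (T v₀).card := ⟨v₀, hv₀, hv₀', rfl⟩
  obtain ⟨v, hv, hvA, hvT⟩ := Nat.findGreatest_spec (P := p) (hb _ hp) hp
  have hmax : ∀ u : Fin n → ℚ, u ≠ 0 → (∀ i, 0 ≤ A.mulVec u i) → (T u).card ≤ (T v).card := by
    intro u hu huA
    have hpu : p (T u).card := ⟨u, hu, huA, rfl⟩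
    rw [hvT]
    exact Nat.le_findGreatest (hb _ hpu) hpu
  have hrow : ∀ j, ∃ i, ∀ x : Fin n → ℚ, A.mulVec x i = x j := by
    intro j
    obtain ⟨i, hi⟩ := hpos j
    exact ⟨i, fun x => by simp [Matrix.mulVec, hi]⟩
  obtain ⟨j₀, hj₀⟩ := Function.ne_iff.1 hv
  have hvj : 0 < v j₀ := by
    obtain ⟨i, hi⟩ := hrow j₀
    exact lt_of_le_of_ne (hi v ▸ hvA i) (Ne.symm hj₀)
  -- A direction `w` that keeps the tight constraints tight has no positive entry: otherwise
  -- moving from `v` along `-w` until the first further constraint is hit contradicts maximality.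
  have key : ∀ w : Fin n → ℚ, (∀ i, A.mulVec v i = 0 → A.mulVec w i = 0) → w j₀ = 0 →
      ∀ j, w j ≤ 0 := by
    intro w hw hw0 j
    by_contra! hj
    obtain ⟨i₁, hi₁⟩ := hrow j
    let S : Finset ι := {i | 0 < A.mulVec w i}
    have hS : S.Nonempty := ⟨i₁, by simp [S, hi₁, hj]⟩
    obtain ⟨i₂, hi₂S, hi₂⟩ := S.exists_min_image (fun i => A.mulVec v i / A.mulVec w i) hS
    have hi₂w : 0 < A.mulVec w i₂ := by simpa [S] using hi₂S
    set t := A.mulVec v i₂ / A.mulVec w i₂ with ht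
    have ht0 : 0 ≤ t := div_nonneg (hvA _) hi₂w.le
    have hu : ∀ i, A.mulVec (v - t • w) i = A.mulVec v i - t * A.mulVec w i := by
      intro i
      simp [Matrix.mulVec_sub, Matrix.mulVec_smul]
    have hsub : T v ⊂ T (v - t • w) := by
      refine (Finset.ssubset_iff_of_subset ?_).2 ⟨i₂, ?_, ?_⟩
      · intro i hi
        have hi' : A.mulVec v i = 0 := by simpa [T] using hi
        have : A.mulVec (v - t • w) i = 0 := by rw [hu, hi', hw i hi']; simp
        simpa [T] using this
      · have : A.mulVec (v - t • w) i₂ = 0 := by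
          rw [hu, ht, div_mul_cancel₀ _ hi₂w.ne', sub_self]
        simpa [T] using this
      · intro hi
        have hi' : A.mulVec v i₂ = 0 := by simpa [T] using hi
        exact hi₂w.ne' (hw _ hi')
    refine absurd (hmax (v - t • w) ?_ ?_) (not_le.2 (Finset.card_lt_card hsub))
    · intro h0
      have := congrFun h0 j₀
      simp [hw0] at this
      exact hvj.ne' this
    · intro i
      rw [hu]
      by_cases hi : 0 < A.mulVec w i
      · have := hi₂ i (by simpa [S] using hi)
        rw [le_div_iff₀ hi] at this
        linarith
      · have := mul_nonneg ht0 (neg_nonneg.2 (not_lt.1 hi))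
        have := hvA i
        linarith
  refine ⟨v, j₀, hvj, hvA, fun w hw hw0 => ?_⟩
  funext j
  refine le_antisymm (key w hw hw0 j) ?_
  have := key (-w) (fun i hi => by simp [Matrix.mulVec_neg, hw i hi]) (by simp [hw0]) j
  simpa using this

/-- If the rows in `R` and `e_{j₀}` together have trivial common kernel, then `e_{j₀}` can be
completed by `n - 1` rows from `R` to an integer matrix with nonzero determinant. -/
lemma exists_square_system {n : ℕ} (R : Set (Fin n → ℤ)) (j₀ : Fin n)
    (hR : ∀ w : Fin n → ℚ, (∀ r ∈ R, (fun j => (r j : ℚ)) ⬝ᵥ w = 0) → w j₀ = 0 → w = 0) :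
    ∃ (B : Matrix (Fin n) (Fin n) ℤ) (i₀ : Fin n), B.det ≠ 0 ∧ B i₀ = Pi.single j₀ 1 ∧
      ∀ i, i ≠ i₀ → B i ∈ R := by
  classical
  let c : (Fin n → ℤ) → (Fin n → ℚ) := fun r j => (r j : ℚ)
  let e : Fin n → ℤ := Pi.single j₀ 1
  have hce : c e = Pi.single j₀ 1 := by
    funext j
    by_cases h : j = j₀
    · subst h; simp [c, e]
    · simp [c, e, h]
  have hcinj : Function.Injective c := by
    intro r s hrs
    funext j
    exact Int.cast_injective (α := ℚ) (congrFun hrs j)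
  have hs : LinearIndepOn ℚ id ({c e} : Set (Fin n → ℚ)) := by
    apply LinearIndepOn.singleton
    rw [id, hce]
    intro h
    simpa using congrFun h j₀
  obtain ⟨b, hbt, hsb, htb, hb⟩ := exists_linearIndepOn_id_extension hs
    (t := c '' (insert e R)) (by
      rw [Set.singleton_subset_iff]
      exact Set.mem_image_of_mem c (Set.mem_insert _ _))
  have hspan : Submodule.span ℚ b = ⊤ := by
    -- a proper subspace is killed by a nonzero functional, that is, by some `w ≠ 0`
    by_contra hne
    obtain ⟨f, hf, hfb⟩ := Submodule.exists_le_ker_of_lt_top _ (lt_top_iff_ne_top.2 hne)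
    apply hf
    let w : Fin n → ℚ := fun j => f (Pi.single j 1)
    have hfw : ∀ x, f x = x ⬝ᵥ w := by
      intro x
      rw [LinearMap.pi_apply_eq_sum_univ f x]
      simp only [dotProduct, w, smul_eq_mul]
      refine Finset.sum_congr rfl fun i _ => ?_
      congr 2
      funext j
      simp [Pi.single_apply, eq_comm]
    have hz : ∀ r ∈ insert e R, c r ⬝ᵥ w = 0 := by
      intro r hr
      rw [← hfw]
      exact hfb (htb (Set.mem_image_of_mem c hr))
    have hw : w = 0 := by
      apply hR w (fun r hr => hz r (Set.mem_insert_of_mem _ hr))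
      have := hz e (Set.mem_insert _ _)
      rw [hce] at this
      simpa using this
    ext x
    simp [hfw, hw]
  let bas : Module.Basis b ℚ (Fin n → ℚ) := Module.Basis.mk hb (by simp [hspan])
  let σ : b ≃ Fin n := bas.indexEquiv (Pi.basisFun ℚ (Fin n))
  have hlift : ∀ i : Fin n, ∃ r ∈ insert e R, c r = (σ.symm i : Fin n → ℚ) :=
    fun i => hbt (σ.symm i).2
  choose B hBR hB using hlift
  have heb : c e ∈ b := hsb rfl
  refine ⟨B, σ ⟨c e, heb⟩, ?_, ?_, ?_⟩
  · have hli : LinearIndependent ℚ (fun i => (σ.symm i : Fin n → ℚ)) :=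
      hb.comp σ.symm σ.symm.injective
    have hunit : IsUnit (Matrix.of fun i => (σ.symm i : Fin n → ℚ)) :=
      Matrix.linearIndependent_rows_iff_isUnit.1 hli
    have hmap : (Matrix.of fun i => (σ.symm i : Fin n → ℚ))
        = Matrix.map (B : Matrix (Fin n) (Fin n) ℤ) (Int.castRingHom ℚ) := by
      ext i j
      exact (congrFun (hB i) j).symm
    rw [hmap, Matrix.isUnit_iff_isUnit_det, isUnit_iff_ne_zero] at hunit
    intro h0
    apply hunit
    refine (RingHom.map_det (Int.castRingHom ℚ) (B : Matrix (Fin n) (Fin n) ℤ)).symm.trans ?_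
    rw [h0, map_zero]
  · apply hcinj
    rw [hB]
    simp [e]
  · intro i hi
    rcases hBR i with h | h
    · exfalso
      apply hi
      rw [← σ.symm_apply_eq]
      apply Subtype.ext
      rw [← hB i, h]
    · exact h

/-- If `M` is a `k`-bounded `m × n` integer matrix and the set
`P = {v ∈ ℕ^n : M · v ≥ 0}` contains a nonzero vector, then it contains a nonzero
vector every entry of which is at most `2 ^ (n * k) * n ^ (n / 2)` (as real numbers). -/
theorem small_vector_in_polytope (m n k : ℕ)
    (M : Matrix (Fin m) (Fin n) ℤ) (hM : ∀ i j, |M i j| ≤ 2 ^ k)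
    (hP : ∃ v : Fin n → ℕ, v ≠ 0 ∧
      ∀ i, 0 ≤ M.mulVec (fun j => (v j : ℤ)) i) :
    ∃ v : Fin n → ℕ, v ≠ 0 ∧
      (∀ i, 0 ≤ M.mulVec (fun j => (v j : ℤ)) i) ∧
      (∀ j, (v j : ℝ) ≤ 2 ^ (n * k) * (n : ℝ) ^ ((n : ℝ) / 2)) := by
  classical
  let A : Matrix (Fin m ⊕ Fin n) (Fin n) ℤ := Matrix.fromRows M 1
  have hcast : ∀ (v : Fin n → ℕ) i,
      (M.map (Int.cast : ℤ → ℚ)).mulVec (fun j => (v j : ℚ)) i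
        = ((M.mulVec (fun j => (v j : ℤ)) i : ℤ) : ℚ) := by
    intro v i
    simp [Matrix.mulVec, dotProduct]
  have hone : (1 : Matrix (Fin n) (Fin n) ℤ).map (Int.cast : ℤ → ℚ) = 1 :=
    Matrix.map_one _ Int.cast_zero Int.cast_one
  have hAmap : A.map (Int.cast : ℤ → ℚ) = Matrix.fromRows (M.map Int.cast) 1 := by
    rw [← hone]
    ext (i | i) j <;> rfl
  have hAbound : ∀ i j, |A i j| ≤ 2 ^ k := by
    rintro (i | i) j
    · exact hM i j
    · have h1 : (1 : ℤ) ≤ 2 ^ k := one_le_pow₀ (by norm_num)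
      by_cases hij : i = j
      · simpa [A, hij] using h1
      · simp [A, hij]
  obtain ⟨v, j₀, hvj, hvA, hker⟩ := exists_extreme_ray (A.map (Int.cast : ℤ → ℚ))
    (by
      intro j
      refine ⟨Sum.inr j, ?_⟩
      rw [hAmap]
      funext l
      simp [Matrix.one_apply, Pi.single_apply, eq_comm])
    (by
      obtain ⟨v, hv, hvM⟩ := hP
      refine ⟨fun j => (v j : ℚ), fun h => hv ?_, ?_⟩
      · funext j
        exact Nat.cast_eq_zero.1 (congrFun h j)
      · rw [hAmap, Matrix.fromRows_mulVec]
        rintro (i | i)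
        · rw [Sum.elim_inl, hcast]
          exact_mod_cast hvM i
        · simp)
  obtain ⟨B, i₀, hdet, hBi₀, hBR⟩ := exists_square_system
    {r | ∃ i, r = A i ∧ (A.map (Int.cast : ℤ → ℚ)).mulVec v i = 0} j₀ (by
      intro w hw hw0
      exact hker w (fun i hi => hw (A i) ⟨i, rfl, hi⟩) hw0)
  have hBv : (B.map (Int.cast : ℤ → ℚ)).mulVec v = Pi.single i₀ (v j₀) := by
    funext i
    by_cases hi : i = i₀
    · subst hi
      simp [Matrix.mulVec, dotProduct, hBi₀, Pi.single_apply]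
    · obtain ⟨l, hl, hl0⟩ := hBR i hi
      rw [Pi.single_eq_of_ne hi, ← hl0]
      simp [Matrix.mulVec, dotProduct, hl]
  have hadj : ∀ j, (B.adjugate j i₀ : ℚ) * v j₀ = (B.det : ℚ) * v j := by
    intro j
    have h1 : (B.adjugate.map (Int.cast : ℤ → ℚ)) * (B.map (Int.cast : ℤ → ℚ))
        = (B.det : ℚ) • 1 := by
      have h2 := congrArg (fun X => X.map (Int.castRingHom ℚ)) (Matrix.adjugate_mul B)
      simp only [Matrix.map_mul] at h2
      refine h2.trans ?_
      ext a b
      rw [Matrix.map_apply, Matrix.smul_apply, Matrix.smul_apply]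
      by_cases hab : a = b <;> simp [Matrix.one_apply, hab]
    have h3 := congrArg (fun x => (B.adjugate.map (Int.cast : ℤ → ℚ)).mulVec x j) hBv
    simp only [Matrix.mulVec_mulVec, h1] at h3
    simp [Matrix.smul_mulVec] at h3
    linarith
  have hdetQ : (B.det : ℚ) ≠ 0 := by exact_mod_cast hdet
  have hv0 : ∀ j, 0 ≤ v j := by
    intro j
    have := hvA (Sum.inr j)
    rw [hAmap, Matrix.fromRows_mulVec] at this
    simpa using this
  have hc : 0 < |(B.det : ℚ)| / v j₀ := div_pos (abs_pos.2 hdetQ) hvj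
  have hu : ∀ j, (((B.adjugate j i₀).natAbs : ℕ) : ℚ) = |(B.det : ℚ)| / v j₀ * v j := by
    intro j
    have h := congrArg abs (hadj j)
    rw [abs_mul, abs_mul, abs_of_pos hvj, abs_of_nonneg (hv0 j)] at h
    rw [Nat.cast_natAbs, Int.cast_abs, div_mul_eq_mul_div, eq_div_iff hvj.ne', h]
  refine ⟨fun j => (B.adjugate j i₀).natAbs, ?_, ?_, ?_⟩
  · intro h
    have h1 := hu j₀
    rw [show (B.adjugate j₀ i₀).natAbs = 0 from congrFun h j₀] at h1
    have := mul_pos hc hvj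
    simp only [Nat.cast_zero] at h1
    linarith
  · intro i
    have h1 := hcast (fun j => (B.adjugate j i₀).natAbs) i
    have h2 : (fun j => (((B.adjugate j i₀).natAbs : ℕ) : ℚ)) = (|(B.det : ℚ)| / v j₀) • v := by
      funext j
      exact hu j
    rw [h2, Matrix.mulVec_smul] at h1
    have h3 := hvA (Sum.inl i)
    rw [hAmap, Matrix.fromRows_mulVec, Sum.elim_inl] at h3
    have h4 := mul_nonneg hc.le h3
    rw [Pi.smul_apply, smul_eq_mul] at h1
    rw [h1] at h4
    exact Int.cast_nonneg_iff.1 h4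
  · intro j
    have hBbound : ∀ a b, |(B.updateRow i₀ (Pi.single j 1)) a b| ≤ 2 ^ k := by
      intro a b
      by_cases ha : a = i₀
      · subst ha
        have h1 : (1 : ℤ) ≤ 2 ^ k := one_le_pow₀ (by norm_num)
        by_cases hb : b = j
        · simpa [hb] using h1
        · simp [hb]
      · obtain ⟨l, hl, -⟩ := hBR a ha
        rw [Matrix.updateRow_ne ha, hl]
        exact hAbound l b
    have h := abs_det_le_of_entries_le n
      ((B.updateRow i₀ (Pi.single j 1)).map (Int.castRingHom ℝ)) (2 ^ k) (by positivity) (by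
        intro a b
        have := hBbound a b
        rw [Matrix.map_apply, eq_intCast]
        exact_mod_cast this)
    have hd := RingHom.map_det (Int.castRingHom ℝ) (B.updateRow i₀ (Pi.single j 1))
    rw [RingHom.mapMatrix_apply] at hd
    rw [← hd, ← Matrix.adjugate_apply, ← pow_mul, mul_comm k n] at h
    rw [Nat.cast_natAbs, Int.cast_abs]
    exact h
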